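/- If DC holds, then for all integers k ≥ 3 and r ≥ 1, R_{2r}(k) − 1 ≥ (R_r(k−1) − 1) · (R_r(k+1) − 1). -/

import Mathlib

open Filter Topology
open scoped ENNReal

/-- `N` has the Ramsey property for the tuple `k`: every `r`-coloring of the
edges of the complete graph on `N` vertices admits a color `i` and a set of
`k i` vertices all of whose connecting edges have color `i`. -/
def ramseyProp {r : ℕ} (k : Fin r → ℕ) (N : ℕ) : Prop :=
  ∀ c : Sym2 (Fin N) → Fin r, ∃ i : Fin r, ∃ S : Finset (Fin N),
    S.card = k i ∧ ∀ u ∈ S, ∀ v ∈ S, u ≠ v → c s(u, v) = i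

/-- The multicolor Ramsey number `R(k 0, …, k (r-1))`: the least positive `N`
with the Ramsey property. -/
noncomputable def multiRamsey {r : ℕ} (k : Fin r → ℕ) : ℕ :=
  sInf {N | 0 < N ∧ ramseyProp k N}

/-- The diagonal multicolor Ramsey number `R_r(k)`. -/
noncomputable def diagRamsey (r k : ℕ) : ℕ :=
  multiRamsey (fun _ : Fin r => k)

/-- DC, the "decreasing conjecture". -/
def DC : Prop :=
  ∀ (r : ℕ), 2 ≤ r → ∀ k : Fin r → ℕ, (∀ l, 2 ≤ k l) →
    ∀ i j : Fin r, i ≠ j → 3 ≤ k i → k i ≤ k j →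
      multiRamsey (fun l => if l = i then k i - 1 else if l = j then k j + 1 else k l)
        ≤ multiRamsey k

/-- The finite multicolor Ramsey theorem, for large vertex sets inside an arbitrary type. -/
theorem exists_forall_monochromatic {r : ℕ} (m : ℕ) (k : Fin r → ℕ) (hm : ∑ i, k i = m) :
    ∃ N, ∀ (α : Type) [DecidableEq α] (c : Sym2 α → Fin r) (V : Finset α), N ≤ V.card →
      ∃ i, ∃ S ⊆ V, S.card = k i ∧ ∀ u ∈ S, ∀ v ∈ S, u ≠ v → c s(u, v) = i := by
  induction m generalizing k with
  | zero =>
    refine ⟨1, fun α _ c V hV => ?_⟩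
    obtain ⟨v, -⟩ := Finset.card_pos.mp hV
    refine ⟨c s(v, v), ∅, by simp, ?_, by simp⟩
    have := Finset.single_le_sum (f := k) (fun _ _ => Nat.zero_le _)
      (Finset.mem_univ (c s(v, v)))
    simp
    omega
  | succ m ih =>
    by_cases h0 : ∃ i, k i = 0
    · obtain ⟨i, hi⟩ := h0
      exact ⟨0, fun α _ c V _ => ⟨i, ∅, by simp, by simp [hi], by simp⟩⟩
    push Not at h0
    have hsum : ∀ i, ∑ j, Function.update k i (k i - 1) j = m := by
      intro i
      have h1 := Finset.add_sum_erase Finset.univ k (Finset.mem_univ i)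
      have h2 := Finset.add_sum_erase Finset.univ (Function.update k i (k i - 1))
        (Finset.mem_univ i)
      have h3 : ∑ j ∈ Finset.univ.erase i, Function.update k i (k i - 1) j =
          ∑ j ∈ Finset.univ.erase i, k j :=
        Finset.sum_congr rfl fun j hj => Function.update_of_ne (Finset.ne_of_mem_erase hj) _ _
      rw [Function.update_self, h3] at h2
      have := h0 i
      omega
    choose N hN using fun i => ih (Function.update k i (k i - 1)) (hsum i)
    refine ⟨∑ i, N i + 2, fun α _ c V hV => ?_⟩
    obtain ⟨v, hv⟩ := Finset.card_pos.mp (show 0 < V.card by omega)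
    obtain ⟨i, hi⟩ : ∃ i, N i ≤ ((V.erase v).filter fun w => c s(v, w) = i).card := by
      by_contra! hlt
      have h1 := Finset.card_eq_sum_card_fiberwise (s := V.erase v) (t := Finset.univ)
        (f := fun w => c s(v, w)) (fun _ _ => Finset.mem_coe.mpr (Finset.mem_univ _))
      have h2 := Finset.sum_le_sum (s := Finset.univ) fun i _ => (hlt i).le
      rw [Finset.card_erase_of_mem hv] at h1
      omega
    obtain ⟨j, S, hSV, hS, hmono⟩ := hN i α c _ hi
    have hmem : ∀ w ∈ S, w ≠ v ∧ w ∈ V ∧ c s(v, w) = i := fun w hw => by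
      simpa [and_assoc] using hSV hw
    by_cases hji : j = i
    · subst hji
      refine ⟨j, insert v S, ?_, ?_, ?_⟩
      · exact Finset.insert_subset hv fun w hw => (hmem w hw).2.1
      · rw [Finset.card_insert_of_notMem fun h => (hmem v h).1 rfl, hS, Function.update_self]
        have := h0 j
        omega
      · intro u hu w hw huw
        rcases Finset.mem_insert.mp hu with rfl | hu'
        · exact (hmem w ((Finset.mem_insert.mp hw).resolve_left huw.symm)).2.2
        · rcases Finset.mem_insert.mp hw with rfl | hw'
          · rw [Sym2.eq_swap]
            exact (hmem u hu').2.2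
          · exact hmono u hu' w hw' huw
    · refine ⟨j, S, fun w hw => (hmem w hw).2.1, ?_, hmono⟩
      rw [hS, Function.update_of_ne hji]

theorem multiRamsey_spec {r : ℕ} (k : Fin r → ℕ) :
    0 < multiRamsey k ∧ ramseyProp k (multiRamsey k) := by
  obtain ⟨N, hN⟩ := exists_forall_monochromatic _ k rfl
  refine Nat.sInf_mem (s := {N | 0 < N ∧ ramseyProp k N}) ⟨N + 1, N.succ_pos, fun c => ?_⟩
  obtain ⟨i, S, -, hS⟩ := hN _ c Finset.univ (by simp)
  exact ⟨i, S, hS⟩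

theorem ramseyProp.mono {r : ℕ} {k : Fin r → ℕ} {M N : ℕ} (h : ramseyProp k M) (hMN : M ≤ N) :
    ramseyProp k N := by
  intro c
  obtain ⟨i, S, hS, hmono⟩ := h fun e => c (e.map (Fin.castLE hMN))
  refine ⟨i, S.map (Fin.castLEEmb hMN), by simpa using hS, ?_⟩
  simp only [Finset.mem_map, forall_exists_index, and_imp]
  rintro _ u hu rfl _ v hv rfl huv
  exact hmono u hu v hv fun h => huv (h ▸ rfl)

theorem lt_multiRamsey_of_not_ramseyProp {r : ℕ} {k : Fin r → ℕ} {N : ℕ}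
    (h : ¬ ramseyProp k N) : N < multiRamsey k := by
  by_contra! hle
  exact h ((multiRamsey_spec k).2.mono hle)

theorem not_ramseyProp_of_lt {r : ℕ} {k : Fin r → ℕ} {N : ℕ} (hN : 0 < N)
    (h : N < multiRamsey k) : ¬ ramseyProp k N := fun hp =>
  Nat.notMem_of_lt_sInf h ⟨hN, hp⟩

/-- The lexicographic product of two colorings with disjoint color sets. -/
theorem not_ramseyProp_append_mul {r s : ℕ} {k : Fin r → ℕ} {l : Fin s → ℕ} {a b : ℕ}
    (ha : ¬ ramseyProp k a) (hb : ¬ ramseyProp l b) :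
    ¬ ramseyProp (Fin.append k l) (a * b) := by
  unfold ramseyProp at ha hb
  push Not at ha hb
  obtain ⟨c, hc⟩ := ha
  obtain ⟨d, hd⟩ := hb
  intro h
  let p : Fin (a * b) → Fin a := fun x => (finProdFinEquiv.symm x).1
  let q : Fin (a * b) → Fin b := fun x => (finProdFinEquiv.symm x).2
  have hpq : ∀ x y, p x = p y → q x = q y → x = y := fun x y h1 h2 =>
    finProdFinEquiv.symm.injective (Prod.ext h1 h2)
  classical
  obtain ⟨i, S, hS, hmono⟩ := h fun e =>
    if (e.map p).IsDiag then Fin.natAdd r (d (e.map q)) else Fin.castAdd s (c (e.map p))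
  simp only [Sym2.map_mk, Sym2.mk_isDiag_iff] at hmono
  induction i using Fin.addCases with
  | left i =>
    have hne : ∀ u ∈ S, ∀ v ∈ S, u ≠ v → p u ≠ p v := by
      intro u hu v hv huv hp
      have := hmono u hu v hv huv
      rw [if_pos hp, Fin.ext_iff] at this
      simp at this
      omega
    obtain ⟨x, hx, y, hy, hxy, hcol⟩ := hc i (S.image p) (by
      rw [Finset.card_image_of_injOn fun u hu v hv huv => by_contra fun hn => hne u hu v hv hn huv,
        hS, Fin.append_left])
    obtain ⟨u, hu, rfl⟩ := Finset.mem_image.mp hx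
    obtain ⟨v, hv, rfl⟩ := Finset.mem_image.mp hy
    have := hmono u hu v hv fun h => hxy (congrArg p h)
    rw [if_neg hxy] at this
    exact hcol (Fin.castAdd_injective _ _ this)
  | right i =>
    have heq : ∀ u ∈ S, ∀ v ∈ S, u ≠ v → p u = p v := by
      intro u hu v hv huv
      by_contra hp
      have := hmono u hu v hv huv
      rw [if_neg hp, Fin.ext_iff] at this
      simp at this
      omega
    obtain ⟨x, hx, y, hy, hxy, hcol⟩ := hd i (S.image q) (by
      rw [Finset.card_image_of_injOn fun u hu v hv huv =>
        by_contra fun hn => hn (hpq u v (heq u hu v hv hn) huv), hS, Fin.append_right])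
    obtain ⟨u, hu, rfl⟩ := Finset.mem_image.mp hx
    obtain ⟨v, hv, rfl⟩ := Finset.mem_image.mp hy
    have huv : u ≠ v := fun h => hxy (congrArg q h)
    have := hmono u hu v hv huv
    rw [if_pos (heq u hu v hv huv)] at this
    exact hcol (Fin.natAdd_injective _ _ this)

theorem mul_le_multiRamsey_append {r s : ℕ} (k : Fin r → ℕ) (l : Fin s → ℕ) :
    (multiRamsey k - 1) * (multiRamsey l - 1) ≤ multiRamsey (Fin.append k l) - 1 := by
  rcases Nat.eq_zero_or_pos (multiRamsey k - 1) with ha | ha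
  · simp [ha]
  rcases Nat.eq_zero_or_pos (multiRamsey l - 1) with hb | hb
  · simp [hb]
  exact Nat.le_sub_one_of_lt <| lt_multiRamsey_of_not_ramseyProp <| not_ramseyProp_append_mul
    (not_ramseyProp_of_lt ha (by omega)) (not_ramseyProp_of_lt hb (by omega))

/-- The constant tuple `k` of length `2r` with `t` pairs of entries replaced by `k - 1, k + 1`. -/
def spreadTuple (r k t : ℕ) : Fin (r + r) → ℕ := fun l =>
  if l.val < t then k - 1 else if r ≤ l.val ∧ l.val < r + t then k + 1 else k

theorem DC.multiRamsey_spreadTuple_le (hDC : DC) {r k : ℕ} (hk : 3 ≤ k) {t : ℕ} (ht : t ≤ r) :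
    multiRamsey (spreadTuple r k t) ≤ diagRamsey (r + r) k := by
  induction t with
  | zero =>
    have : spreadTuple r k 0 = fun _ => k := by
      funext l
      simp only [spreadTuple]
      split_ifs <;> omega
    rw [this, diagRamsey]
  | succ t ih =>
    have hi : spreadTuple r k t ⟨t, by omega⟩ = k := by
      simp only [spreadTuple]
      split_ifs <;> omega
    have hj : spreadTuple r k t ⟨r + t, by omega⟩ = k := by
      simp only [spreadTuple]
      split_ifs <;> omega
    have key := hDC (r + r) (by omega) (spreadTuple r k t)
      (fun l => by simp only [spreadTuple]; split_ifs <;> omega)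
      ⟨t, by omega⟩ ⟨r + t, by omega⟩ (by simp only [ne_eq, Fin.mk.injEq]; omega)
      (by omega) (by omega)
    rw [hi, hj] at key
    refine le_trans (le_of_eq (congrArg multiRamsey ?_)) (key.trans (ih (by omega)))
    funext l
    simp only [spreadTuple, Fin.ext_iff]
    split_ifs <;> omega

theorem spreadTuple_self (r k : ℕ) :
    spreadTuple r k r = Fin.append (fun _ : Fin r => k - 1) (fun _ : Fin r => k + 1) := by
  funext l
  induction l using Fin.addCases with
  | left i => rw [Fin.append_left]; simp [spreadTuple]
  | right i => rw [Fin.append_right]; simp [spreadTuple]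

/-- if DC holds, then `R_{2r}(k) − 1 ≥ (R_r(k−1) − 1) · (R_r(k+1) − 1)`. -/
theorem stmt4 (hDC : DC) (k : ℕ) (hk : 3 ≤ k) (r : ℕ) (hr : 1 ≤ r) :
    (diagRamsey r (k - 1) - 1) * (diagRamsey r (k + 1) - 1) ≤ diagRamsey (2 * r) k - 1 := by
  have h := hDC.multiRamsey_spreadTuple_le hk (le_refl r)
  rw [spreadTuple_self] at h
  rw [two_mul]
  exact (mul_le_multiRamsey_append _ _).trans (Nat.sub_le_sub_right h 1)
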